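/- arXiv:2205.11851 — 5 statements merged into one kernel-verified Lean document; each statement's English description precedes it below -/
import Mathlib

section
/- Let f : ℕ → ℕ be a regular rule sequence (f(0) = 0 and 0 ≤ f(m) − f(m−1) ≤ 1 for every m ≥ 1), and let G be the Grundy function of one-pile maximum Nim with rule sequence f. Then for every x ≥ 1 with f(x) = f(x−1), we have G(x) = G(x − f(x) − 1). -/
/-!
The idea is that the window `G (x - f x), …, G (x - 1), G x` is always a permutation of
`0, …, f x` (`window_perm`). Passing from `x` to `x + 1`, the options of `x + 1` are the
positions of the window at `x`, except that the leftmost position `x - f x` is dropped when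
`f (x + 1) = f x`.
* If `f (x + 1) = f x + 1`, the options take all values `0, …, f x`, so `G (x + 1) = f x + 1`
  (`grundy_step`).
* If `f (x + 1) = f x`, the options take all values `0, …, f x` except `G (x - f x)`, so
  `G (x + 1) = G (x - f x)` (`grundy_plateau`), which is the claim.

In both cases the window at `x + 1` is again a permutation.
-/

/-- The minimum excluded value of a set of naturals. -/
noncomputable def mex (S : Set ℕ) : ℕ := sInf {n : ℕ | n ∉ S}

theorem mex_eq_of {S : Set ℕ} {n : ℕ} (hn : n ∉ S) (h : ∀ k < n, k ∈ S) : mex S = n := by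
  have hmem : n ∈ {n : ℕ | n ∉ S} := hn
  refine le_antisymm (Nat.sInf_le hmem) (not_lt.1 fun hlt => ?_)
  exact Nat.sInf_mem ⟨n, hmem⟩ (h _ hlt)

/-- The values `G (x - v)`, `0 ≤ v ≤ b`, are exactly `0, …, b`, each taken once; the condition
`b ≤ x` ensures that the subtractions do not truncate. -/
structure WindowPerm (G : ℕ → ℕ) (b x : ℕ) : Prop where
  le : b ≤ x
  bound : ∀ v ≤ b, G (x - v) ≤ b
  inj : ∀ v ≤ b, ∀ w ≤ b, G (x - v) = G (x - w) → v = w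
  surj : ∀ g ≤ b, ∃ v ≤ b, G (x - v) = g

section

variable {f G : ℕ → ℕ}

theorem grundy_plateau
    (hG : ∀ x : ℕ, G x = mex {g : ℕ | ∃ v : ℕ, 1 ≤ v ∧ v ≤ f x ∧ g = G (x - v)})
    {x : ℕ} (h : WindowPerm G (f x) x) (hfx : f (x + 1) = f x) :
    G (x + 1) = G (x - f x) := by
  rw [hG (x + 1), hfx]
  apply mex_eq_of
  · rintro ⟨v, hv1, hv, hg⟩
    rw [show x + 1 - v = x - (v - 1) by omega] at hg
    have := h.inj _ le_rfl _ (by omega) hg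
    omega
  · intro k hk
    obtain ⟨v, hv, rfl⟩ := h.surj k (hk.le.trans (h.bound _ le_rfl))
    have hne : v ≠ f x := by
      rintro rfl
      exact lt_irrefl _ hk
    exact ⟨v + 1, by omega, by omega, by rw [Nat.add_sub_add_right]⟩

theorem grundy_step
    (hG : ∀ x : ℕ, G x = mex {g : ℕ | ∃ v : ℕ, 1 ≤ v ∧ v ≤ f x ∧ g = G (x - v)})
    {x : ℕ} (h : WindowPerm G (f x) x) (hfx : f (x + 1) = f x + 1) :
    G (x + 1) = f x + 1 := by
  rw [hG (x + 1), hfx]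
  apply mex_eq_of
  · rintro ⟨v, hv1, hv, hg⟩
    rw [show x + 1 - v = x - (v - 1) by omega] at hg
    have := h.bound (v - 1) (by omega)
    omega
  · intro k hk
    obtain ⟨v, hv, rfl⟩ := h.surj k (by omega)
    exact ⟨v + 1, by omega, by omega, by rw [Nat.add_sub_add_right]⟩

theorem window_perm (hf0 : f 0 = 0)
    (hreg : ∀ m : ℕ, 1 ≤ m → f (m - 1) ≤ f m ∧ f m ≤ f (m - 1) + 1)
    (hG : ∀ x : ℕ, G x = mex {g : ℕ | ∃ v : ℕ, 1 ≤ v ∧ v ≤ f x ∧ g = G (x - v)})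
    (x : ℕ) : WindowPerm G (f x) x := by
  induction x with
  | zero =>
    have h0 : G 0 = 0 := by
      rw [hG 0, hf0]
      apply mex_eq_of
      · rintro ⟨v, hv1, hv, -⟩
        omega
      · intro k hk
        omega
    rw [hf0]
    refine ⟨le_rfl, ?_, ?_, ?_⟩
    · intro v _
      simp [h0]
    · intro v hv w hw _
      omega
    · intro g hg
      exact ⟨0, le_rfl, by simp only [Nat.sub_zero, h0]; omega⟩
  | succ x ih =>
    have hr := hreg (x + 1) (by omega)
    rw [Nat.add_sub_cancel] at hr
    have hle := ih.le
    have hsucc : ∀ v, x + 1 - (v + 1) = x - v := fun v => by omega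
    rcases (by omega : f (x + 1) = f x ∨ f (x + 1) = f x + 1) with e | e
    · have hp := grundy_plateau hG ih e
      rw [e]
      refine ⟨by omega, ?_, ?_, ?_⟩
      · rintro (_ | v) hv
        · rw [Nat.sub_zero, hp]
          exact ih.bound _ le_rfl
        · rw [hsucc]
          exact ih.bound _ (by omega)
      · rintro (_ | v) hv (_ | w) hw hvw
        · rfl
        · rw [Nat.sub_zero, hp, hsucc] at hvw
          have := ih.inj _ le_rfl _ (by omega) hvw
          omega
        · rw [Nat.sub_zero, hp, hsucc] at hvw
          have := ih.inj _ (by omega) _ le_rfl hvw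
          omega
        · rw [hsucc, hsucc] at hvw
          rw [ih.inj _ (by omega) _ (by omega) hvw]
      · intro g hg
        obtain ⟨v, hv, rfl⟩ := ih.surj g hg
        rcases hv.eq_or_lt with rfl | hlt
        · exact ⟨0, by omega, hp⟩
        · exact ⟨v + 1, hlt, by rw [hsucc]⟩
    · have hp := grundy_step hG ih e
      rw [e]
      refine ⟨by omega, ?_, ?_, ?_⟩
      · rintro (_ | v) hv
        · rw [Nat.sub_zero, hp]
        · rw [hsucc]
          exact (ih.bound _ (by omega)).trans (by omega)
      · rintro (_ | v) hv (_ | w) hw hvw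
        · rfl
        · rw [Nat.sub_zero, hp, hsucc] at hvw
          have := ih.bound w (by omega)
          omega
        · rw [Nat.sub_zero, hp, hsucc] at hvw
          have := ih.bound v (by omega)
          omega
        · rw [hsucc, hsucc] at hvw
          rw [ih.inj _ (by omega) _ (by omega) hvw]
      · intro g hg
        rcases hg.eq_or_lt with rfl | hlt
        · exact ⟨0, by omega, hp⟩
        · obtain ⟨v, hv, rfl⟩ := ih.surj g (by omega)
          exact ⟨v + 1, by omega, by rw [hsucc]⟩

end

/-- Lemma 2.1(i): for a regular rule sequence `f`, if `f x = f (x-1)` (with `x ≥ 1`),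
then the Grundy value of one-pile maximum Nim satisfies `G x = G (x - f x - 1)`. -/
theorem maxNim_grundy_plateau
    (f : ℕ → ℕ)
    (hf0 : f 0 = 0)
    (hreg : ∀ m : ℕ, 1 ≤ m → f (m - 1) ≤ f m ∧ f m ≤ f (m - 1) + 1)
    (G : ℕ → ℕ)
    (hG : ∀ x : ℕ, G x = mex {g : ℕ | ∃ v : ℕ, 1 ≤ v ∧ v ≤ f x ∧ g = G (x - v)})
    (x : ℕ) (hx : 1 ≤ x) (hfx : f x = f (x - 1)) :
    G x = G (x - f x - 1) := by
  obtain ⟨y, rfl⟩ : ∃ y, x = y + 1 := ⟨x - 1, by omega⟩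
  rw [Nat.add_sub_cancel] at hfx
  rw [grundy_plateau hG (window_perm hf0 hreg hG y) hfx, hfx]
  congr 1
  omega
end

section
/- Let f : ℕ → ℕ be a regular rule sequence (f(0) = 0 and 0 ≤ f(m) − f(m−1) ≤ 1 for every m ≥ 1), and let G be the Grundy function of one-pile maximum Nim with rule sequence f. Then for every x ≥ 1 with f(x) > f(x−1), we have G(x) = f(x). -/
theorem mem_of_lt_mex {S : Set ℕ} {n : ℕ} (h : n < mex S) : n ∈ S := by
  by_contra hn
  exact absurd (Nat.sInf_le (show n ∈ {n : ℕ | n ∉ S} from hn)) (not_le.mpr h)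

/-- Finiteness of `S` (here, containment in a finset) matters: otherwise `S` could be all of `ℕ`,
and `sInf ∅ = 0` would be an element of `S`. -/
theorem mex_notMem {S : Set ℕ} (T : Finset ℕ) (h : S ⊆ T) : mex S ∉ S := by
  obtain ⟨n, hn⟩ := Infinite.exists_notMem_finset T
  exact Nat.sInf_mem (s := {n : ℕ | n ∉ S}) ⟨n, fun hS => hn (h hS)⟩

theorem mex_le_card {S : Set ℕ} (T : Finset ℕ) (h : S ⊆ T) : mex S ≤ T.card := by
  have hsub : Finset.range (mex S) ⊆ T := fun n hn =>
    h (mem_of_lt_mex (Finset.mem_range.mp hn))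
  simpa using Finset.card_le_card hsub

/-- Iterated regularity: monotonicity and the slope-one growth bound. -/
theorem regular_add (f : ℕ → ℕ)
    (hreg : ∀ m : ℕ, 1 ≤ m → f (m - 1) ≤ f m ∧ f m ≤ f (m - 1) + 1) (m k : ℕ) :
    f m ≤ f (m + k) ∧ f (m + k) ≤ f m + k := by
  induction k with
  | zero => simp
  | succ k ih =>
    have h := hreg (m + k + 1) (by omega)
    rw [Nat.add_sub_cancel] at h
    rw [← Nat.add_assoc]
    omega

/-- Lemma 2.1(ii): for a regular rule sequence `f`, if `f x > f (x-1)` (with `x ≥ 1`),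
then the Grundy value of one-pile maximum Nim satisfies `G x = f x`. -/
theorem maxNim_grundy_jump
    (f : ℕ → ℕ)
    (hf0 : f 0 = 0)
    (hreg : ∀ m : ℕ, 1 ≤ m → f (m - 1) ≤ f m ∧ f m ≤ f (m - 1) + 1)
    (G : ℕ → ℕ)
    (hG : ∀ x : ℕ, G x = mex {g : ℕ | ∃ v : ℕ, 1 ≤ v ∧ v ≤ f x ∧ g = G (x - v)})
    (x : ℕ) (hx : 1 ≤ x) (hfx : f (x - 1) < f x) :
    G x = f x := by
  have hopt : ∀ y, {g : ℕ | ∃ v : ℕ, 1 ≤ v ∧ v ≤ f y ∧ g = G (y - v)} ⊆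
      ((Finset.Icc 1 (f y)).image fun v => G (y - v) : Finset ℕ) := by
    rintro y g ⟨v, h1, h2, rfl⟩
    exact Finset.mem_coe.mpr (Finset.mem_image_of_mem _ (Finset.mem_Icc.mpr ⟨h1, h2⟩))
  have hle : ∀ y, G y ≤ f y := by
    intro y
    rw [hG y]
    refine (mex_le_card _ (hopt y)).trans (Finset.card_image_le.trans ?_)
    simp
  have hne : ∀ y v, 1 ≤ v → v ≤ f y → G (y - v) ≠ G y := by
    intro y v h1 h2 h
    have hn := mex_notMem _ (hopt y)
    rw [← hG y] at hn
    exact hn ⟨v, h1, h2, h.symm⟩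
  have hstep := hreg x hx
  -- The pile is large enough that the `f x` moves lead to distinct positions.
  have hfx_le : f x ≤ x := by
    have h := (regular_add f hreg 0 x).2
    rwa [hf0, Nat.zero_add] at h
  have hlt : ∀ u v, 1 ≤ u → u < v → v ≤ f x → G (x - v) ≠ G (x - u) := by
    intro u v hu huv hv
    have h := (regular_add f hreg (x - u) (u - 1)).2
    rw [show x - u + (u - 1) = x - 1 by omega] at h
    have h' := hne (x - u) (v - u) (by omega) (by omega)
    rwa [show x - u - (v - u) = x - v by omega] at h'
  have hinj : Set.InjOn (fun v => G (x - v)) (Finset.Icc 1 (f x) : Finset ℕ) := by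
    intro u hu v hv huv
    simp only [Finset.coe_Icc, Set.mem_Icc] at hu hv
    rcases lt_trichotomy u v with h | h | h
    · exact absurd huv.symm (hlt u v hu.1 h hv.2)
    · exact h
    · exact absurd huv (hlt v u hv.1 h hu.2)
  have himage : (Finset.Icc 1 (f x)).image (fun v => G (x - v)) = Finset.range (f x) := by
    apply Finset.eq_of_subset_of_card_le
    · intro g hg
      obtain ⟨v, hv, rfl⟩ := Finset.mem_image.mp hg
      rw [Finset.mem_Icc] at hv
      have h := (regular_add f hreg (x - v) (v - 1)).1
      rw [show x - v + (v - 1) = x - 1 by omega] at h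
      have h' := hle (x - v)
      exact Finset.mem_range.mpr (by omega)
    · rw [Finset.card_image_of_injOn hinj]
      simp
  refine le_antisymm (hle x) (not_lt.mp fun hlt' => ?_)
  rw [← Finset.mem_range, ← himage] at hlt'
  obtain ⟨v, hv, hgv⟩ := Finset.mem_image.mp hlt'
  rw [Finset.mem_Icc] at hv
  exact hne x v hv.1 hv.2 hgv
end

section
/- Let G be the Grundy function of one-pile maximum Nim with rule sequence f(x) = ⌈x/2⌉. Then for every even t with t ≥ 2, we have G(t) = G((t − 2)/2). -/
/-- A criterion for `G t = n`, phrased in terms of the positions `⌊t/2⌋ ≤ i < t` reachable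
from `t` instead of the number of stones removed. -/
theorem halfNim_eq_of {G : ℕ → ℕ}
    (hG : ∀ t : ℕ, G t = mex {g : ℕ | ∃ v : ℕ, 1 ≤ v ∧ v ≤ (t + 1) / 2 ∧ g = G (t - v)})
    {t n : ℕ} (hn : ∀ i, t / 2 ≤ i → i < t → G i ≠ n)
    (h : ∀ k < n, ∃ i, t / 2 ≤ i ∧ i < t ∧ G i = k) : G t = n := by
  rw [hG t]
  apply mex_eq_of
  · rintro ⟨v, h1, h2, h3⟩
    exact hn (t - v) (by omega) (by omega) h3.symm
  · intro k hk
    obtain ⟨i, h1, h2, h3⟩ := h k hk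
    exact ⟨t - i, by omega, by omega, by rw [Nat.sub_sub_self h2.le, h3]⟩

/-- `G` maps `[m, 2m]` bijectively onto `[0, m]`. -/
def HalfNimWindow (G : ℕ → ℕ) (m : ℕ) : Prop :=
  Set.BijOn G (Set.Icc m (2 * m)) (Set.Iic m)

theorem HalfNimWindow.odd {G : ℕ → ℕ}
    (hG : ∀ t : ℕ, G t = mex {g : ℕ | ∃ v : ℕ, 1 ≤ v ∧ v ≤ (t + 1) / 2 ∧ g = G (t - v)})
    {m : ℕ} (hw : HalfNimWindow G m) : G (2 * m + 1) = m + 1 := by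
  apply halfNim_eq_of hG
  · intro i h1 h2 h3
    have : G i ≤ m := hw.mapsTo ⟨by omega, by omega⟩
    omega
  · intro k hk
    obtain ⟨i, ⟨h1, h2⟩, h3⟩ := hw.surjOn (Set.mem_Iic.mpr (Nat.le_of_lt_succ hk))
    exact ⟨i, by omega, by omega, h3⟩

theorem HalfNimWindow.even {G : ℕ → ℕ}
    (hG : ∀ t : ℕ, G t = mex {g : ℕ | ∃ v : ℕ, 1 ≤ v ∧ v ≤ (t + 1) / 2 ∧ g = G (t - v)})
    {m : ℕ} (hw : HalfNimWindow G m) : G (2 * m + 2) = G m := by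
  have hodd := hw.odd hG
  have hm : G m ≤ m := hw.mapsTo ⟨le_rfl, by omega⟩
  apply halfNim_eq_of hG
  · intro i h1 h2 h3
    rcases Nat.lt_or_ge (2 * m) i with hi | hi
    · obtain rfl : i = 2 * m + 1 := by omega
      omega
    · have := hw.injOn ⟨by omega, hi⟩ ⟨le_rfl, by omega⟩ h3
      omega
  · intro k hk
    obtain ⟨i, ⟨h1, h2⟩, h3⟩ := hw.surjOn (Set.mem_Iic.mpr (by omega : k ≤ m))
    have hne : i ≠ m := by
      rintro rfl
      omega
    exact ⟨i, by omega, by omega, h3⟩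

theorem halfNim_window {G : ℕ → ℕ}
    (hG : ∀ t : ℕ, G t = mex {g : ℕ | ∃ v : ℕ, 1 ≤ v ∧ v ≤ (t + 1) / 2 ∧ g = G (t - v)})
    (m : ℕ) : HalfNimWindow G m := by
  induction m with
  | zero =>
    have h0 : G 0 = 0 := halfNim_eq_of hG (by omega) (by omega)
    refine ⟨?_, ?_, ?_⟩
    · rintro i ⟨h1, h2⟩
      obtain rfl : i = 0 := by omega
      exact h0.le
    · rintro i ⟨h1, h2⟩ j ⟨h3, h4⟩ _
      omega
    · intro k hk
      exact ⟨0, ⟨le_rfl, le_rfl⟩, h0.trans (Nat.le_zero.mp hk).symm⟩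
  | succ m hw =>
    have hodd := hw.odd hG
    have heven := hw.even hG
    have hle : ∀ i, m ≤ i → i ≤ 2 * m → G i ≤ m := fun i h1 h2 => hw.mapsTo ⟨h1, h2⟩
    have hinj : ∀ i j, m ≤ i → i ≤ 2 * m → m ≤ j → j ≤ 2 * m → G i = G j → i = j :=
      fun i j h1 h2 h3 h4 h => hw.injOn ⟨h1, h2⟩ ⟨h3, h4⟩ h
    have hm := hle m le_rfl (by omega)
    have hcases : ∀ i, i ≤ 2 * (m + 1) → i ≤ 2 * m ∨ i = 2 * m + 1 ∨ i = 2 * m + 2 := by omega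
    refine ⟨?_, ?_, ?_⟩
    · rintro i ⟨h1, h2⟩
      rw [Set.mem_Iic]
      rcases hcases i h2 with h | rfl | rfl
      · have := hle i (by omega) h
        omega
      · omega
      · omega
    · rintro i ⟨h1, h2⟩ j ⟨h3, h4⟩ hij
      rcases hcases i h2 with h | rfl | rfl <;> rcases hcases j h4 with h' | rfl | rfl
      · exact hinj i j (by omega) h (by omega) h' hij
      · have := hle i (by omega) h
        omega
      · have := hinj i m (by omega) h le_rfl (by omega) (by omega)
        omega
      · have := hle j (by omega) h'
        omega
      · rfl
      · omega
      · have := hinj m j le_rfl (by omega) (by omega) h' (by omega)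
        omega
      · omega
      · rfl
    · intro k hk
      rw [Set.mem_Iic] at hk
      rcases Nat.lt_or_ge m k with hk' | hk'
      · exact ⟨2 * m + 1, ⟨by omega, by omega⟩, by omega⟩
      · obtain ⟨i, ⟨h1, h2⟩, h3⟩ := hw.surjOn (Set.mem_Iic.mpr hk')
        -- The position `m` leaves the window; `2m + 2` takes over its value.
        rcases eq_or_ne i m with rfl | hne
        · exact ⟨2 * i + 2, ⟨by omega, by omega⟩, by omega⟩
        · exact ⟨i, ⟨by omega, by omega⟩, h3⟩

/-- For one-pile maximum Nim with rule sequence `f(x) = ⌈x/2⌉`: if `t` is even and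
`t ≥ 2`, then `G t = G ((t - 2) / 2)`. -/
theorem halfNim_grundy_even
    (G : ℕ → ℕ)
    (hG : ∀ t : ℕ, G t = mex {g : ℕ | ∃ v : ℕ, 1 ≤ v ∧ v ≤ (t + 1) / 2 ∧ g = G (t - v)})
    (t : ℕ) (ht : Even t) (ht2 : 2 ≤ t) :
    G t = G ((t - 2) / 2) := by
  obtain ⟨m, rfl⟩ : ∃ m, t = 2 * m + 2 := by
    obtain ⟨r, rfl⟩ := ht
    exact ⟨r - 1, by omega⟩
  rw [show (2 * m + 2 - 2) / 2 = m by omega]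
  exact (halfNim_window hG m).even hG
end

section
/- Let G(·,·) be the Grundy function of one-pile maximum Nim with rule sequence f(x) = ⌈x/2⌉ and a one-time pass. For every u ≥ 1, if G(u,0) = 0 then G(u,1) = 1. -/
theorem mex_eq {S : Set ℕ} {a : ℕ} (ha : a ∉ S) (h : ∀ j < a, j ∈ S) : mex S = a := by
  unfold mex
  apply le_antisymm
  · exact Nat.sInf_le ha
  · by_contra! hlt
    exact (Nat.sInf_mem (s := {n : ℕ | n ∉ S}) ⟨a, ha⟩) (h _ hlt)

/-- The hypothesis that some value lies outside `S` is needed since `mex Set.univ = 0`. -/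
theorem mex_notMem_s5 {S : Set ℕ} (hS : ∃ a, a ∉ S) : mex S ∉ S :=
  Nat.sInf_mem (s := {n : ℕ | n ∉ S}) hS

/-- Removing between `1` and `⌈t/2⌉` stones from `t` leaves a pile `i` with `t/2 ≤ i < t`. -/
theorem options_eq (F : ℕ → ℕ) (t : ℕ) :
    {g : ℕ | ∃ v : ℕ, 1 ≤ v ∧ v ≤ (t + 1) / 2 ∧ g = F (t - v)} =
      {g : ℕ | ∃ i : ℕ, t / 2 ≤ i ∧ i < t ∧ F i = g} := by
  ext g
  constructor
  · rintro ⟨v, h1, h2, rfl⟩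
    exact ⟨t - v, by omega, by omega, rfl⟩
  · rintro ⟨i, h1, h2, rfl⟩
    exact ⟨t - i, by omega, by omega, by rw [Nat.sub_sub_self h2.le]⟩

/-- The permutation `0 ↦ 1 ↦ 2 ↦ 0`, `2k-1 ↔ 2k` (`k ≥ 2`) by which the pass acts on the Grundy
values of nonempty piles. -/
def passPerm (g : ℕ) : ℕ :=
  if g = 0 then 1 else if g = 1 then 2 else if g = 2 then 0
  else if g % 2 = 1 then g + 1 else g - 1

/-- The inverse of `passPerm`. -/
def passPermInv (g : ℕ) : ℕ :=
  if g = 0 then 2 else if g = 1 then 0 else if g = 2 then 1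
  else if g % 2 = 1 then g + 1 else g - 1

theorem passPerm_inv (g : ℕ) : passPerm (passPermInv g) = g := by
  grind [passPerm, passPermInv]

theorem passPerm_injective {a b : ℕ} (h : passPerm a = passPerm b) : a = b := by
  unfold passPerm at h
  split_ifs at h <;> omega

theorem passPerm_ne (a : ℕ) : passPerm a ≠ a := by
  unfold passPerm
  split_ifs <;> omega

section NoPass

variable {F : ℕ → ℕ} (hF : ∀ t, F t = mex {g : ℕ | ∃ i : ℕ, t / 2 ≤ i ∧ i < t ∧ F i = g})
include hF

/-- A position and any of its options have different Grundy values. -/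
theorem option_ne {t i : ℕ} (h1 : t / 2 ≤ i) (h2 : i < t) : F i ≠ F t := by
  intro h
  have hfin : {g : ℕ | ∃ i : ℕ, t / 2 ≤ i ∧ i < t ∧ F i = g}.Finite :=
    ((Set.finite_Iio t).image F).subset (by
      rintro g ⟨i, -, hi, rfl⟩
      exact ⟨i, hi, rfl⟩)
  have := mex_notMem_s5 hfin.exists_notMem
  rw [← hF t] at this
  exact this ⟨i, h1, h2, h⟩

theorem grundy_odd_aux {m : ℕ} (hm : ∀ j, (∃ i, m ≤ i ∧ i ≤ 2 * m ∧ F i = j) ↔ j ≤ m) :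
    F (2 * m + 1) = m + 1 := by
  rw [hF]
  apply mex_eq
  · rintro ⟨i, h1, h2, h3⟩
    have := (hm (m + 1)).1 ⟨i, by omega, by omega, h3⟩
    omega
  · intro j hj
    obtain ⟨i, h1, h2, h3⟩ := (hm j).2 (by omega)
    exact ⟨i, by omega, by omega, h3⟩

theorem grundy_even_aux {m : ℕ} (hm : ∀ j, (∃ i, m ≤ i ∧ i ≤ 2 * m ∧ F i = j) ↔ j ≤ m) :
    F (2 * m + 2) = F m := by
  have hle : F m ≤ m := (hm _).1 ⟨m, le_rfl, by omega, rfl⟩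
  rw [hF]
  apply mex_eq
  · rintro ⟨i, h1, h2, h3⟩
    -- Here `m` is itself an option of `i`, so the two values differ.
    exact option_ne hF (t := i) (i := m) (by omega) (by omega) h3.symm
  · intro j hj
    obtain ⟨i, h1, h2, h3⟩ := (hm j).2 (by omega)
    have : i ≠ m := by rintro rfl; omega
    exact ⟨i, by omega, by omega, h3⟩

/-- Passing from `m, …, 2m` to `m+1, …, 2m+2` trades the pile `m` for the pile `2m+2` of the same
value, and adds the pile `2m+1` of value `m+1`. -/
theorem window_values (m : ℕ) : ∀ j, (∃ i, m ≤ i ∧ i ≤ 2 * m ∧ F i = j) ↔ j ≤ m := by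
  induction m with
  | zero =>
    have h0 : F 0 = 0 := by
      rw [hF]
      exact mex_eq (by rintro ⟨i, h1, h2, h3⟩; omega) (by omega)
    intro j
    constructor
    · rintro ⟨i, h1, h2, h3⟩
      obtain rfl : i = 0 := by omega
      omega
    · intro h
      exact ⟨0, by omega, by omega, by omega⟩
  | succ m ih =>
    have ho := grundy_odd_aux hF ih
    have he := grundy_even_aux hF ih
    intro j
    constructor
    · rintro ⟨i, h1, h2, rfl⟩
      by_cases hi1 : i = 2 * m + 1
      · rw [hi1, ho]
      by_cases hi2 : i = 2 * m + 2
      · rw [hi2, he]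
        have := (ih _).1 ⟨m, le_rfl, by omega, rfl⟩
        omega
      · have := (ih _).1 ⟨i, by omega, by omega, rfl⟩
        omega
    · intro h
      by_cases hj : j = m + 1
      · exact ⟨2 * m + 1, by omega, by omega, by omega⟩
      obtain ⟨i, h1, h2, h3⟩ := (ih j).2 (by omega)
      by_cases hi : i = m
      · exact ⟨2 * m + 2, by omega, by omega, by rw [he, ← hi, h3]⟩
      · exact ⟨i, by omega, by omega, h3⟩

theorem grundy_odd (m : ℕ) : F (2 * m + 1) = m + 1 :=
  grundy_odd_aux hF (window_values hF m)

theorem grundy_even (m : ℕ) : F (2 * m + 2) = F m :=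
  grundy_even_aux hF (window_values hF m)

/-- `F` is the Grundy function without the pass, `P` the one with the pass available. -/
theorem grundy_pass {P : ℕ → ℕ} (hP0 : P 0 = 0)
    (hP : ∀ t, 1 ≤ t →
      P t = mex ({g : ℕ | ∃ i : ℕ, t / 2 ≤ i ∧ i < t ∧ P i = g} ∪ {F t})) (t : ℕ) :
    1 ≤ t → P t = passPerm (F t) := by
  induction t using Nat.strong_induction_on with
  | _ t ih =>
  intro ht
  have hF1 : F 1 = 1 := grundy_odd hF 0
  rw [hP t ht]
  rcases eq_or_ne t 1 with rfl | ht1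
  · rw [hF1]
    apply mex_eq
    · rintro (⟨i, h1, h2, h3⟩ | h)
      · obtain rfl : i = 0 := by omega
        rw [hP0] at h3
        simp [passPerm] at h3
      · simp [passPerm] at h
    · intro j hj
      have hj2 : j < 2 := by simpa [passPerm] using hj
      by_cases hj0 : j = 0
      · exact Or.inl ⟨0, by omega, by omega, by omega⟩
      · right
        change j = 1
        omega
  -- The empty pile is not an option of `t ≥ 2`, so the induction hypothesis covers all options.
  apply mex_eq
  · rintro (⟨i, h1, h2, h3⟩ | h)
    · rw [ih i h2 (by omega)] at h3
      exact option_ne hF h1 h2 (passPerm_injective h3)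
    · exact passPerm_ne _ h
  · intro j hj
    by_cases hjt : j = F t
    · exact Or.inr hjt
    left
    -- It suffices that `σ⁻¹ j` is the value of an option of `t` without the pass.
    suffices h : ∃ i, t / 2 ≤ i ∧ i < t ∧ F i = passPermInv j by
      obtain ⟨i, h1, h2, h3⟩ := h
      exact ⟨i, h1, h2, by rw [ih i h2 (by omega), h3, passPerm_inv]⟩
    obtain ⟨m, rfl | rfl⟩ : ∃ m, t = 2 * m + 1 ∨ t = 2 * m + 2 :=
      ⟨(t - 1) / 2, by omega⟩
    · rw [grundy_odd hF] at hj hjt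
      have hle : passPermInv j ≤ m := by
        grind [passPerm, passPermInv]
      obtain ⟨i, h1, h2, h3⟩ := (window_values hF m _).2 hle
      exact ⟨i, by omega, by omega, h3⟩
    · rw [grundy_even hF] at hj hjt
      have hFm : F m ≤ m := (window_values hF m _).1 ⟨m, le_rfl, by omega, rfl⟩
      have hle : passPermInv j ≤ m + 1 := by
        unfold passPerm at hj
        unfold passPermInv
        split_ifs at hj ⊢ <;> omega
      have hne : passPermInv j ≠ F m := by
        intro h
        rw [← h, passPerm_inv] at hj
        exact lt_irrefl _ hj
      -- The piles `m+1, …, 2m+2` take all values up to `m+1`; the last one is not an option of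
      -- `2m+2`, but its value `F m` is excluded.
      obtain ⟨i, h1, h2, h3⟩ := (window_values hF (m + 1) _).2 hle
      have hi : i ≠ 2 * m + 2 := by
        rintro rfl
        exact hne (by rw [← h3, grundy_even hF])
      exact ⟨i, by omega, by omega, h3⟩

end NoPass

/-- One-pile maximum Nim with `f(x) = ⌈x/2⌉` and a one-time pass: if `G(u,0) = 0` (with `u ≥ 1`), then `G(u,1) = 1`. -/
theorem halfNimPass_grundy_zero
    (G : ℕ → ℕ → ℕ)
    (hG0 : ∀ t : ℕ, G t 0 = mex {g : ℕ | ∃ v : ℕ, 1 ≤ v ∧ v ≤ (t + 1) / 2 ∧ g = G (t - v) 0})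
    (hG10 : G 0 1 = 0)
    (hG1 : ∀ t : ℕ, 1 ≤ t → G t 1 =
        mex ({g : ℕ | ∃ v : ℕ, 1 ≤ v ∧ v ≤ (t + 1) / 2 ∧ g = G (t - v) 1} ∪ {G t 0}))
    (u : ℕ) (hu : 1 ≤ u) (h : G u 0 = 0) :
    G u 1 = 1 := by
  have key := grundy_pass (F := fun t => G t 0) (P := fun t => G t 1)
    (fun t => by rw [← options_eq]; exact hG0 t) hG10
    (fun t ht => by rw [← options_eq]; exact hG1 t ht) u hu
  simpa [h, passPerm] using key
end

section
/- Let G(·,·) be the Grundy function of one-pile maximum Nim with rule sequence f(x) = ⌈x/2⌉ and a one-time pass. For every u ≥ 1 and every integer m ≥ 1, if G(u,0) = 2m − 1 then G(u,1) = 2m. -/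
lemma mex_eq_of_s8 {S : Set ℕ} {a : ℕ} (h1 : a ∉ S) (h2 : ∀ n < a, n ∈ S) : mex S = a := by
  unfold mex
  apply le_antisymm
  · exact Nat.sInf_le h1
  · by_contra hlt
    exact Nat.sInf_mem (s := {n : ℕ | n ∉ S}) ⟨a, h1⟩ (h2 _ (not_le.mp hlt))

/-- `g` restricts to a bijection from the window `[k, 2k]` onto `{0, …, k}`. -/
def WindowBij (g : ℕ → ℕ) (k : ℕ) : Prop :=
  (∀ s, k ≤ s → s ≤ 2 * k → g s ≤ k) ∧
  (∀ n, n ≤ k → ∃ s, k ≤ s ∧ s ≤ 2 * k ∧ g s = n) ∧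
  (∀ s r, k ≤ s → s ≤ 2 * k → k ≤ r → r ≤ 2 * k → g s = g r → s = r)

/-- The permutation `0 ↦ 1 ↦ 2 ↦ 0`, `3 ↔ 4`, `5 ↔ 6`, … turning the Grundy value of a nonempty
pile without the pass into its value with the pass. -/
def passVal (a : ℕ) : ℕ :=
  if a = 0 then 1 else if a = 2 then 0 else if a % 2 = 1 then a + 1 else a - 1

/-- The inverse permutation of `passVal`. -/
def passInv (n : ℕ) : ℕ :=
  if n = 0 then 2 else if n = 1 then 0 else if n % 2 = 1 then n + 1 else n - 1

lemma passVal_passInv (n : ℕ) : passVal (passInv n) = n := by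
  rcases n with _ | _ | n
  · rfl
  · rfl
  · obtain ⟨a, ha⟩ : ∃ a, a = passInv (n + 1 + 1) := ⟨_, rfl⟩
    rw [← ha]
    unfold passInv at ha
    unfold passVal
    split_ifs at ha ⊢ <;> omega

lemma passVal_inj {a b : ℕ} (h : passVal a = passVal b) : a = b := by
  unfold passVal at h; split_ifs at h <;> omega

lemma passVal_ne (a : ℕ) : passVal a ≠ a := by
  unfold passVal; split_ifs <;> omega

lemma passInv_lt {n a : ℕ} (ha : 3 ≤ a) (hn : n < passVal a) (hna : n ≠ a) : passInv n < a := by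
  unfold passVal at hn; unfold passInv; split_ifs at hn ⊢ <;> omega

section

variable {g : ℕ → ℕ}

lemma window_step
    (hg : ∀ t : ℕ, g t = mex {x : ℕ | ∃ v : ℕ, 1 ≤ v ∧ v ≤ (t + 1) / 2 ∧ x = g (t - v)})
    {k : ℕ} (hk : WindowBij g k) :
    g (2 * k + 1) = k + 1 ∧ g (2 * k + 2) = g k ∧ WindowBij g (k + 1) := by
  obtain ⟨hle, hsurj, hinj⟩ := hk
  have h1 : g (2 * k + 1) = k + 1 := by
    rw [hg]
    apply mex_eq_of_s8
    · rintro ⟨v, hv1, hv2, hv⟩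
      have := hle (2 * k + 1 - v) (by omega) (by omega)
      omega
    · intro n hn
      obtain ⟨s, hs1, hs2, hs⟩ := hsurj n (by omega)
      refine ⟨2 * k + 1 - s, by omega, by omega, ?_⟩
      rw [show 2 * k + 1 - (2 * k + 1 - s) = s by omega, hs]
  have hkk := hle k le_rfl (by omega)
  have h2 : g (2 * k + 2) = g k := by
    rw [hg (2 * k + 2)]
    apply mex_eq_of_s8
    · rintro ⟨v, hv1, hv2, hv⟩
      rcases Nat.eq_or_lt_of_le hv1 with rfl | hv1'
      · rw [show 2 * k + 2 - 1 = 2 * k + 1 by omega] at hv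
        omega
      · have := hinj _ _ le_rfl (by omega) (by omega) (by omega) hv
        omega
    · intro n hn
      obtain ⟨s, hs1, hs2, hs⟩ := hsurj n (by omega)
      have hsk : s ≠ k := by rintro rfl; omega
      refine ⟨2 * k + 2 - s, by omega, by omega, ?_⟩
      rw [show 2 * k + 2 - (2 * k + 2 - s) = s by omega, hs]
  refine ⟨h1, h2, ?_, ?_, ?_⟩
  · intro s hs1 hs2
    by_cases ha : s = 2 * k + 1
    · subst ha; omega
    by_cases hb : s = 2 * k + 2
    · subst hb; omega
    have := hle s (by omega) (by omega)
    omega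
  · intro n hn
    by_cases ha : n = k + 1
    · exact ⟨2 * k + 1, by omega, by omega, by omega⟩
    obtain ⟨s, hs1, hs2, hs⟩ := hsurj n (by omega)
    by_cases hb : s = k
    · subst hb
      exact ⟨2 * s + 2, by omega, by omega, by omega⟩
    · exact ⟨s, by omega, by omega, hs⟩
  · -- Each `s` in the new window has value `k + 1` exactly at `s = 2k+1`; otherwise it has the same
    -- value as a point of the old window, namely `k` if `s = 2k+2` and `s` itself if not.
    have key : ∀ s, k + 1 ≤ s → s ≤ 2 * (k + 1) → (s = 2 * k + 1 ∧ g s = k + 1) ∨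
        (s = 2 * k + 2 ∧ g s = g k) ∨ (s ≤ 2 * k ∧ g s ≤ k) := by
      intro s hs1 hs2
      by_cases ha : s = 2 * k + 1
      · subst ha; exact Or.inl ⟨rfl, h1⟩
      by_cases hb : s = 2 * k + 2
      · subst hb; exact Or.inr (Or.inl ⟨rfl, h2⟩)
      exact Or.inr (Or.inr ⟨by omega, hle s (by omega) (by omega)⟩)
    intro s r hs1 hs2 hr1 hr2 e
    rcases key s hs1 hs2 with ⟨a, b⟩ | ⟨a, b⟩ | ⟨a, b⟩ <;>
    rcases key r hr1 hr2 with ⟨c, d⟩ | ⟨c, d⟩ | ⟨c, d⟩ <;> try omega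
    · have := hinj k r le_rfl (by omega) (by omega) c (by omega)
      omega
    · have := hinj k s le_rfl (by omega) (by omega) a (by omega)
      omega
    · exact hinj s r (by omega) a (by omega) c e

lemma windowBij
    (hg : ∀ t : ℕ, g t = mex {x : ℕ | ∃ v : ℕ, 1 ≤ v ∧ v ≤ (t + 1) / 2 ∧ x = g (t - v)})
    (k : ℕ) : WindowBij g k := by
  induction k with
  | zero =>
    have h0 : g 0 = 0 := by
      rw [hg]
      apply mex_eq_of_s8
      · rintro ⟨v, hv1, hv2, -⟩
        omega
      · intro n hn
        omega
    refine ⟨?_, ?_, ?_⟩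
    · intro s _ hs
      obtain rfl : s = 0 := by omega
      omega
    · intro n hn
      exact ⟨0, by omega, by omega, by omega⟩
    · intro s r _ _ _ _ _
      omega
  | succ k ih => exact (window_step hg ih).2.2

lemma pass_eq {h : ℕ → ℕ}
    (hg : ∀ t : ℕ, g t = mex {x : ℕ | ∃ v : ℕ, 1 ≤ v ∧ v ≤ (t + 1) / 2 ∧ x = g (t - v)})
    (h0 : h 0 = 0)
    (hh : ∀ t : ℕ, 1 ≤ t → h t =
        mex ({x : ℕ | ∃ v : ℕ, 1 ≤ v ∧ v ≤ (t + 1) / 2 ∧ x = h (t - v)} ∪ {g t}))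
    (t : ℕ) (ht : 1 ≤ t) : h t = passVal (g t) := by
  have g0 : g 0 = 0 := by
    have := (windowBij hg 0).1 0 le_rfl le_rfl
    omega
  induction t using Nat.strong_induction_on with
  | _ t ih =>
  rcases Nat.eq_or_lt_of_le ht with rfl | ht2
  · -- The only window containing the exceptional size `0`, where `h 0 ≠ passVal (g 0)`.
    have g1 : g 1 = 1 := (window_step hg (windowBij hg 0)).1
    rw [hh 1 le_rfl, g1]
    apply mex_eq_of_s8
    · rintro (⟨v, hv1, hv2, hv⟩ | hv)
      · obtain rfl : v = 1 := by omega
        simp [h0, passVal] at hv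
      · exact passVal_ne 1 hv
    · intro n hn
      have hn2 : n < 2 := hn
      obtain rfl | rfl : n = 0 ∨ n = 1 := by omega
      · exact Or.inl ⟨1, le_rfl, by omega, by simp [h0]⟩
      · exact Or.inr rfl
  · rw [hh t ht]
    apply mex_eq_of_s8
    · rintro (⟨v, hv1, hv2, hv⟩ | hv)
      · rw [ih (t - v) (by omega) (by omega)] at hv
        have e := passVal_inj hv
        obtain ⟨k, hk | hk⟩ : ∃ k, t = 2 * k + 1 ∨ t = 2 * k + 2 := ⟨(t - 1) / 2, by omega⟩
        · have a := (window_step hg (windowBij hg k)).1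
          have b := (windowBij hg k).1 (t - v) (by omega) (by omega)
          rw [← hk] at a
          omega
        · have := (windowBij hg (k + 1)).2.2 t (t - v) (by omega) (by omega) (by omega)
            (by omega) e
          omega
      · exact passVal_ne _ hv
    · intro n hn
      by_cases hna : n = g t
      · exact Or.inr hna
      left
      -- It suffices to find the `passVal`-preimage of `n` among the pass-free values of the options.
      suffices hs : ∃ s, t / 2 ≤ s ∧ s < t ∧ g s = passInv n by
        obtain ⟨s, hs1, hs2, hs⟩ := hs
        refine ⟨t - s, by omega, by omega, ?_⟩
        rw [show t - (t - s) = s by omega, ih s hs2 (by omega), hs, passVal_passInv]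
      obtain ⟨k, hk | hk⟩ : ∃ k, t = 2 * k + 1 ∨ t = 2 * k + 2 := ⟨(t - 1) / 2, by omega⟩
      · have a := (window_step hg (windowBij hg k)).1
        rw [← hk] at a
        have hb : passInv n ≤ k := by
          by_cases h3 : 3 ≤ g t
          · have := passInv_lt h3 hn hna
            omega
          · have h2 : g t = 2 := by omega
            rw [h2] at hn
            simp [passVal] at hn
        obtain ⟨s, hs1, hs2, hs⟩ := (windowBij hg k).2.1 _ hb
        exact ⟨s, by omega, by omega, hs⟩
      · have a := (window_step hg (windowBij hg k)).2.1
        have hle := (windowBij hg (k + 1)).1 t (by omega) (by omega)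
        rw [← hk] at a
        have hb : passInv n ≤ k + 1 := by
          by_cases h3 : 3 ≤ g t
          · have := passInv_lt h3 hn hna
            omega
          · -- Only `g t = 1`, `n = 0` survives; then `passInv n = 2`, and `k ≠ 0` as `g 0 = 0`.
            have hk0 : k = 0 → g t = 0 := by rintro rfl; omega
            unfold passVal at hn
            unfold passInv
            split_ifs at hn ⊢ <;> omega
        obtain ⟨s, hs1, hs2, hs⟩ := (windowBij hg (k + 1)).2.1 _ hb
        have hst : s ≠ t := by
          rintro rfl
          rw [hs, passVal_passInv] at hn
          omega
        exact ⟨s, by omega, by omega, hs⟩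

end

/-- One-pile maximum Nim with `f(x) = ⌈x/2⌉` and a one-time pass: if `G(u,0) = 2m - 1` with `m ≥ 1` (and `u ≥ 1`), then `G(u,1) = 2m`. -/
theorem halfNimPass_grundy_odd
    (G : ℕ → ℕ → ℕ)
    (hG0 : ∀ t : ℕ, G t 0 = mex {g : ℕ | ∃ v : ℕ, 1 ≤ v ∧ v ≤ (t + 1) / 2 ∧ g = G (t - v) 0})
    (hG10 : G 0 1 = 0)
    (hG1 : ∀ t : ℕ, 1 ≤ t → G t 1 =
        mex ({g : ℕ | ∃ v : ℕ, 1 ≤ v ∧ v ≤ (t + 1) / 2 ∧ g = G (t - v) 1} ∪ {G t 0}))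
    (u : ℕ) (hu : 1 ≤ u) (m : ℕ) (hm : 1 ≤ m) (h : G u 0 = 2 * m - 1) :
    G u 1 = 2 * m := by
  have e := pass_eq (g := fun t => G t 0) (h := fun t => G t 1) hG0 hG10 hG1 u hu
  simp only [h] at e
  rw [e]
  unfold passVal
  split_ifs <;> omega
end
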